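/- Let X be an implicative-orthomodular algebra and let x, y ∈ X with x ≤_Q y. Then for every z ∈ X, x ⊓ z ≤_Q y ⊓ z and x ∪ z ≤_Q y ∪ z. -/

import Mathlib

/-!
Write `x ⊕ y = x* → y`, a commutative and associative operation by the exchange law and
involutivity. In an IOM algebra `x ≤_Q y` holds exactly when `y = c → x` for some `c`, that is,
when `y` is of the form `c* ⊕ x` (`leQ_iff_exists_imp`): one direction is (IOM) itself, and the
other applies (IOM) to `x* = t → y*` and dualizes. The exchange law and contraposition then make `→`
monotone in its second argument (`leQ.imp_right`) and antitone in its first (`leQ.imp_left`).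
Since `x ∪ z = (x → z) → z` and `x ⊓ z = ((z → x) → z*)*`, the variable `x` is acted on by an
even number of order reversals in each, so both operations are monotone in `x`.
-/

/-- An involutive BE algebra `(X, →, 0, 1)`. -/
structure InvBE (X : Type*) where
  imp : X → X → X
  one : X
  zero : X
  imp_self : ∀ x, imp x x = one
  imp_one : ∀ x, imp x one = one
  one_imp : ∀ x, imp one x = x
  exchange : ∀ x y z, imp x (imp y z) = imp y (imp x z)
  zero_imp : ∀ x, imp zero x = one
  imp_involutive : ∀ x, imp (imp x zero) zero = x

namespace InvBE

variable {X : Type*} (A : InvBE X)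

/-- `x* := x → 0`. -/
def neg (x : X) : X := A.imp x A.zero

/-- `x ⊓ y := ((x* → y*) → y*)*`. -/
def inf (x y : X) : X := A.neg (A.imp (A.imp (A.neg x) (A.neg y)) (A.neg y))

/-- `x ∪ y := (x → y) → y`. -/
def sup (x y : X) : X := A.imp (A.imp x y) y

/-- `x ⊙ y := (x → y*)*`. -/
def odot (x y : X) : X := A.neg (A.imp x (A.neg y))

/-- `x ⊕ y := (x* ⊙ y*)*`. -/
def oplus (x y : X) : X := A.neg (A.odot (A.neg x) (A.neg y))

/-- `x ≤_Q y` iff `x = x ⊓ y`. -/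
def leQ (x y : X) : Prop := x = A.inf x y

/-- `x ≤ y` iff `x → y = 1`. -/
def le (x y : X) : Prop := A.imp x y = A.one

/-- (IOM): `x ⊓ (y → x) = x` for all `x, y`. -/
def IOM : Prop := ∀ x y, A.inf x (A.imp y x) = x

/-- (QW): `x → ((x ⊓ y) ⊓ (z ⊓ x)) = (x → y) ⊓ (x → z)` for all `x, y, z`. -/
def QW : Prop :=
  ∀ x y z, A.imp x (A.inf (A.inf x y) (A.inf z x)) = A.inf (A.imp x y) (A.imp x z)

/-- A filter: nonempty, closed under `⊙`, upward closed for `≤_Q`. -/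
def IsFilter (F : Set X) : Prop :=
  F.Nonempty ∧ (∀ x ∈ F, ∀ y ∈ F, A.odot x y ∈ F) ∧
    (∀ x ∈ F, ∀ y : X, A.leQ x y → y ∈ F)

/-- A deductive system: contains `1` and is closed under modus ponens. -/
def IsDS (F : Set X) : Prop :=
  A.one ∈ F ∧ ∀ x y : X, x ∈ F → A.imp x y ∈ F → y ∈ F

/-- `pow x n` is the `⊙`-product of `n + 1` copies of `x`, i.e. `x^(n+1)`. -/
def pow (x : X) : ℕ → X
  | 0 => x
  | n + 1 => A.odot x (pow x n)

/-- A maximal filter: proper and not contained in any other proper filter. -/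
def IsMaximalFilter (F : Set X) : Prop :=
  A.IsFilter F ∧ F ≠ Set.univ ∧
    ∀ G : Set X, A.IsFilter G → F ⊆ G → G ≠ Set.univ → G = F

/-- A strongly maximal filter: for every `x ∉ F` there is `n ≥ 1` with `(xⁿ)* ∈ F`. -/
def IsStronglyMaximalFilter (F : Set X) : Prop :=
  A.IsFilter F ∧ ∀ x : X, x ∉ F → ∃ n : ℕ, A.neg (A.pow x n) ∈ F

/-- `x ≡_F y` iff there is `f` with `x, y ≤_Q f` and `f → x, f → y ∈ F`. -/
def cong (F : Set X) (x y : X) : Prop :=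
  ∃ f : X, A.leQ x f ∧ A.leQ y f ∧ A.imp f x ∈ F ∧ A.imp f y ∈ F

end InvBE

namespace InvBE

variable {X : Type*} {A : InvBE X}

theorem neg_neg (x : X) : A.neg (A.neg x) = x := A.imp_involutive x

theorem neg_imp_neg (x y : X) : A.imp (A.neg x) (A.neg y) = A.imp y x := by
  unfold neg
  rw [A.exchange, A.imp_involutive]

theorem inf_eq (x y : X) : A.inf x y = A.neg (A.imp (A.imp y x) (A.neg y)) := by
  rw [inf, neg_imp_neg]

/-- In an IOM algebra the elements above `x` for `≤_Q` are exactly those of the form `c → x`. -/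
theorem leQ_iff_exists_imp (hA : A.IOM) {x y : X} : A.leQ x y ↔ ∃ c, y = A.imp c x := by
  constructor
  · intro h
    -- `x ≤_Q y` writes `x*` as `t → y*`, so (IOM) gives `y* ≤_Q x*`; negating yields `y = s → x`.
    have hx : A.neg x = A.imp (A.imp y x) (A.neg y) := by
      have h' : x = A.inf x y := h
      rw [inf_eq] at h'
      have h2 := congrArg A.neg h'
      rwa [neg_neg] at h2
    have h3 := hA (A.neg y) (A.imp y x)
    rw [← hx, inf, neg_imp_neg, neg_neg] at h3
    have h4 := congrArg A.neg h3
    rw [neg_neg, neg_neg] at h4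
    exact ⟨_, h4.symm⟩
  · rintro ⟨c, rfl⟩
    exact (hA x c).symm

theorem leQ.imp_right (hA : A.IOM) {x y : X} (h : A.leQ x y) (z : X) :
    A.leQ (A.imp z x) (A.imp z y) := by
  rw [leQ_iff_exists_imp hA] at h ⊢
  obtain ⟨c, rfl⟩ := h
  exact ⟨c, A.exchange z c x⟩

theorem leQ.imp_left (hA : A.IOM) {x y : X} (h : A.leQ x y) (z : X) :
    A.leQ (A.imp y z) (A.imp x z) := by
  rw [leQ_iff_exists_imp hA]
  refine ⟨A.imp y x, ?_⟩
  have h' : x = A.inf x y := h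
  rw [inf_eq] at h'
  have h2 := congrArg A.neg h'
  rw [neg_neg] at h2
  -- Contraposition turns `x → z` into `z* → x*`, where `x* = (y → x) → y*` can be substituted.
  rw [← neg_imp_neg z x, h2, A.exchange, neg_imp_neg]

end InvBE

/-- In an IOM algebra, if `x ≤_Q y`, then `x ⊓ z ≤_Q y ⊓ z` and `x ∪ z ≤_Q y ∪ z`. -/
theorem stmt_4 {X : Type*} (A : InvBE X) (hA : A.IOM) :
    ∀ x y : X, A.leQ x y →
      ∀ z : X, A.leQ (A.inf x z) (A.inf y z) ∧ A.leQ (A.sup x z) (A.sup y z) := by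
  intro x y h z
  refine ⟨?_, (h.imp_left hA z).imp_left hA z⟩
  rw [InvBE.inf_eq, InvBE.inf_eq]
  exact ((h.imp_right hA z).imp_left hA (A.neg z)).imp_left hA A.zero
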